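/- Hook case of the Jacobi–Trudy formula: for integers u ≥ 0 and v ≥ 0 with v + 1 ≤ n, the generalized Schur polynomial of the hook partition satisfies S_{(u|v)} := S_{(u+1,1^v)}(x_1,…,x_n|a,b) = det M, where M is the (v+1)×(v+1) matrix whose first row is (h^{(0)}_{u+1}, h^{(1)}_{u+1}, …, h^{(v)}_{u+1}) and whose i-th row, for 2 ≤ i ≤ v+1, is (h^{(0)}_{2−i}, h^{(1)}_{2−i}, …, h^{(v)}_{2−i}). -/

import Mathlib

open Polynomial Matrix Finset

noncomputable section

variable {K L : Type*} [Field K] [Field L]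

/-- The orthogonal-polynomial sequence: `φ₀ = 1`, `φ₁ = z - a 0`,
`φ_{i+1} = (z - a i)·φ_i - b i·φ_{i-1}` (so `φ_{-1} = 0`). -/
def phi (a b : ℤ → K) : ℕ → Polynomial K
  | 0 => 1
  | 1 => Polynomial.X - Polynomial.C (a 0)
  | (i+2) => (Polynomial.X - Polynomial.C (a (i+1))) * phi a b (i+1)
      - Polynomial.C (b (i+1)) * phi a b i

/-- `φ` with integer index, `0` for negative index. -/
def phiZ (a b : ℤ → K) (m : ℤ) : Polynomial K :=
  if m < 0 then 0 else phi a b m.toNat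

/-- Generalized Schur polynomial `S_λ(y₁,…,y_m|a,b)
  = det(φ_{λ_j+m-j}(y_i)) / ∏_{i<j}(y_i - y_j)` (indices here 0-based). -/
def genS (a b : ℤ → K) (c : K →+* L) {m : ℕ} (y : Fin m → L) (lam : Fin m → ℕ) : L :=
  Matrix.det (Matrix.of fun i j : Fin m =>
      (phi a b (lam j + (m - 1 - (j : ℕ)))).eval₂ c (y i)) /
    ∏ i : Fin m, ∏ j ∈ Finset.Ioi i, (y i - y j)

/-- `h_i = S_{(i)}` for `i ≥ 0`, and `h_i = 0` for `i < 0`. -/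
def genh (a b : ℤ → K) (c : K →+* L) {m : ℕ} (y : Fin m → L) (i : ℤ) : L :=
  if i < 0 then 0 else genS a b c y (fun j => if (j : ℕ) = 0 then i.toNat else 0)

/-- `h_i^{(0)} = h_i`, `h_i^{(r+1)} = h_{i+1}^{(r)} + a(i+m-1)h_i^{(r)} + b(i+m-1)h_{i-1}^{(r)}`. -/
def genhr (a b : ℤ → K) (c : K →+* L) {m : ℕ} (y : Fin m → L) : ℕ → ℤ → L
  | 0, i => genh a b c y i
  | (r+1), i => genhr a b c y r (i+1) + c (a (i + m - 1)) * genhr a b c y r i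
      + c (b (i + m - 1)) * genhr a b c y r (i-1)

/-- The field `F = K(x₁,…,x_n)`. -/
abbrev Fn (K : Type*) [Field K] (n : ℕ) := FractionRing (MvPolynomial (Fin n) K)

/-- The embedding `K → K(x₁,…,x_n)`. -/
def cK (K : Type*) [Field K] (n : ℕ) : K →+* Fn K n :=
  (algebraMap (MvPolynomial (Fin n) K) (Fn K n)).comp MvPolynomial.C

/-- The variables `x₁,…,x_n` as elements of `K(x₁,…,x_n)`. -/
def xv (K : Type*) [Field K] (n : ℕ) (i : Fin n) : Fn K n :=
  algebraMap (MvPolynomial (Fin n) K) (Fn K n) (MvPolynomial.X i)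

/-- The generalized Schur polynomial of the hook partition `(u+1, 1^v)`. -/
def genHook (a b : ℤ → K) (c : K →+* L) {m : ℕ} (y : Fin m → L) (u v : ℕ) : L :=
  genS a b c y (fun j : Fin m => if (j : ℕ) = 0 then u + 1 else if (j : ℕ) ≤ v then 1 else 0)

lemma natDegree_phi_le_and_coeff (a b : ℤ → K) (k : ℕ) :
    (phi a b k).natDegree ≤ k ∧ (phi a b k).coeff k = 1 := by
  induction k using Nat.strong_induction_on with
  | _ k ih =>
    match k, ih with
    | 0, _ => simp [phi]
    | 1, _ => simp [phi]
    | k + 2, ih =>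
      obtain ⟨hd₁, hc₁⟩ := ih (k + 1) (by lia)
      obtain ⟨hd₀, -⟩ := ih k (by lia)
      have hz₁ : (phi a b (k + 1)).coeff (k + 2) = 0 :=
        coeff_eq_zero_of_natDegree_lt (by lia)
      have hz₀ : (phi a b k).coeff (k + 2) = 0 := coeff_eq_zero_of_natDegree_lt (by lia)
      constructor
      · rw [phi]
        refine (natDegree_sub_le _ _).trans (max_le ?_ ?_)
        · refine natDegree_mul_le.trans ?_
          rw [natDegree_X_sub_C]
          lia
        · exact (natDegree_C_mul_le _ _).trans (by lia)
      · rw [phi, sub_mul]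
        simp [coeff_X_mul, hc₁, hz₁, hz₀]

lemma monic_phi (a b : ℤ → K) (k : ℕ) : (phi a b k).Monic :=
  monic_of_natDegree_le_of_coeff_eq_one k (natDegree_phi_le_and_coeff a b k).1
    (natDegree_phi_le_and_coeff a b k).2

lemma natDegree_phi (a b : ℤ → K) (k : ℕ) : (phi a b k).natDegree = k :=
  le_antisymm (natDegree_phi_le_and_coeff a b k).1
    (le_natDegree_of_ne_zero (by rw [(natDegree_phi_le_and_coeff a b k).2]; exact one_ne_zero))

/-- The denominator matrix `φ_{N-j}(y_i)` of the bialternant in `N + 1` variables. -/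
def phiMatrix (a b : ℤ → K) (c : K →+* L) {N : ℕ} (y : Fin (N + 1) → L) :
    Matrix (Fin (N + 1)) (Fin (N + 1)) L :=
  Matrix.of fun i j => (phi a b (N - (j : ℕ))).eval₂ c (y i)

lemma det_phiMatrix (a b : ℤ → K) (c : K →+* L) {N : ℕ} (y : Fin (N + 1) → L) :
    (phiMatrix a b c y).det = ∏ i, ∏ j ∈ Finset.Ioi i, (y i - y j) := by
  have hphi := det_eval_matrixOfPolynomials_eq_det_vandermonde y
    (fun j => (phi a b j).map c) (fun j => by rw [natDegree_map, natDegree_phi])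
    (fun j => (monic_phi a b j).map c)
  have hrev : phiMatrix a b c y =
      (Matrix.of fun i j : Fin (N + 1) => ((phi a b j).map c).eval (y i)).submatrix id
        Fin.revPerm := by
    ext i j
    simp [phiMatrix, Fin.val_rev, eval_map]
  have hproj : projVandermonde (fun _ => 1) y = (vandermonde y).submatrix id Fin.revPerm := by
    ext i j
    simp [projVandermonde_apply, vandermonde_apply]
  have hdet := det_projVandermonde (fun _ : Fin (N + 1) => (1 : L)) y
  rw [hproj, det_permute', hphi] at hdet
  rw [hrev, det_permute', hdet]
  simp

/-- The moment `ℓ(z^r φ_k)`, where `ℓ` is evaluation at the `y i` followed by the first coordinate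
in the basis of columns of `phiMatrix`. -/
def phiMoment (a b : ℤ → K) (c : K →+* L) {N : ℕ} (y : Fin (N + 1) → L) (r k : ℕ) : L :=
  ∑ i, (phiMatrix a b c y)⁻¹ 0 i * y i ^ r * (phi a b k).eval₂ c (y i)

section Moments

variable (a b : ℤ → K) (c : K →+* L) {N : ℕ} (y : Fin (N + 1) → L)

lemma phiMoment_succ_zero (r : ℕ) :
    phiMoment a b c y (r + 1) 0 = phiMoment a b c y r 1 + c (a 0) * phiMoment a b c y r 0 := by
  simp only [phiMoment, Finset.mul_sum, ← Finset.sum_add_distrib]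
  refine Finset.sum_congr rfl fun i _ => ?_
  simp [phi]
  ring

lemma phiMoment_succ_succ (r k : ℕ) :
    phiMoment a b c y (r + 1) (k + 1) = phiMoment a b c y r (k + 2)
      + c (a (k + 1)) * phiMoment a b c y r (k + 1) + c (b (k + 1)) * phiMoment a b c y r k := by
  simp only [phiMoment, Finset.mul_sum, ← Finset.sum_add_distrib]
  refine Finset.sum_congr rfl fun i _ => ?_
  rw [phi]
  simp only [eval₂_sub, eval₂_mul, eval₂_X, eval₂_C]
  ring

lemma genhr_eq_zero_of_lt (r : ℕ) (i : ℤ) (hi : i < -r) : genhr a b c y r i = 0 := by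
  induction r generalizing i with
  | zero => simp only [genhr, genh]; rw [if_pos (by simpa using hi)]
  | succ r ih =>
    push_cast at hi
    rw [genhr, ih _ (by lia), ih _ (by lia), ih _ (by lia)]
    simp

variable {y}

lemma det_phiMatrix_ne_zero (hy : Function.Injective y) : (phiMatrix a b c y).det ≠ 0 := by
  rw [det_phiMatrix]
  refine Finset.prod_ne_zero_iff.2 fun i _ => Finset.prod_ne_zero_iff.2 fun j hj => ?_
  exact sub_ne_zero.2 (hy.ne (Finset.mem_Ioi.1 hj).ne)

lemma phiMoment_zero_sub (hy : Function.Injective y) (j : Fin (N + 1)) :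
    phiMoment a b c y 0 (N - (j : ℕ)) = if j = 0 then 1 else 0 := by
  have hinv := nonsing_inv_mul (phiMatrix a b c y)
    (isUnit_iff_ne_zero.2 (det_phiMatrix_ne_zero a b c hy))
  have hentry := congrFun (congrFun hinv 0) j
  rw [mul_apply, one_apply] at hentry
  simpa [phiMoment, phiMatrix, eq_comm] using hentry

lemma phiMoment_eq_of_add_le (hy : Function.Injective y) (r k : ℕ) (hrk : r + k ≤ N) :
    phiMoment a b c y r k = if r + k = N then 1 else 0 := by
  induction r generalizing k with
  | zero =>
    have h := phiMoment_zero_sub a b c hy ⟨N - k, by lia⟩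
    rw [show N - (N - k) = k by lia] at h
    rw [h]
    refine if_congr ?_ rfl rfl
    rw [Fin.ext_iff, Fin.val_zero]
    simp only
    lia
  | succ r ih =>
    cases k with
    | zero =>
      rw [phiMoment_succ_zero, ih 1 (by lia), ih 0 (by lia), if_neg (by lia : ¬ r + 0 = N)]
      simp
    | succ k =>
      rw [phiMoment_succ_succ, ih (k + 2) (by lia), ih (k + 1) (by lia), ih k (by lia),
        if_neg (by lia : ¬ r + (k + 1) = N), if_neg (by lia : ¬ r + k = N)]
      simp only [mul_zero, add_zero]
      exact if_congr (by lia) rfl rfl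

lemma genh_sub_eq_phiMoment (hy : Function.Injective y) (k : ℕ) :
    genh a b c y ((k : ℤ) - N) = phiMoment a b c y 0 k := by
  rw [genh]
  split_ifs with h
  · rw [phiMoment_eq_of_add_le a b c hy 0 k (by lia), if_neg (by lia)]
  · have hdet := det_phiMatrix_ne_zero a b c hy
    have hcramer := congrFun (det_smul_inv_mulVec_eq_cramer (phiMatrix a b c y)
      (fun i => (phi a b k).eval₂ c (y i)) (isUnit_iff_ne_zero.2 hdet)) 0
    rw [genS, ← det_phiMatrix a b c y, div_eq_iff hdet]
    rw [cramer_apply, Pi.smul_apply, smul_eq_mul, mul_comm] at hcramer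
    convert hcramer.symm using 2
    · ext i j
      rw [updateCol_apply]
      by_cases hj : j = 0
      · subst hj
        simp only [of_apply, Fin.val_zero, if_true]
        congr 2
        lia
      · simp [phiMatrix, hj]
    · simp [phiMoment, mulVec, dotProduct]

lemma genhr_sub_eq_phiMoment (hy : Function.Injective y) (r k : ℕ) (hr : r ≤ N) :
    genhr a b c y r ((k : ℤ) - N) = phiMoment a b c y r k := by
  induction r generalizing k with
  | zero => exact genh_sub_eq_phiMoment a b c hy k
  | succ r ih =>
    have hidx : (k : ℤ) - N + (N + 1 : ℕ) - 1 = k := by push_cast; ring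
    have hnext : (k : ℤ) - N + 1 = (k + 1 : ℕ) - N := by push_cast; ring
    rw [genhr, hidx, hnext, ih _ (by lia), ih _ (by lia)]
    cases k with
    | zero =>
      rw [phiMoment_succ_zero, genhr_eq_zero_of_lt a b c y r _ (by lia)]
      simp
    | succ k =>
      have hprev : ((k + 1 : ℕ) : ℤ) - N - 1 = k - N := by push_cast; ring
      rw [phiMoment_succ_succ, hprev, ih _ (by lia)]
      push_cast
      rfl

/-- A bialternant is the determinant of its moments. -/
lemma genS_eq_det_phiMoment (hy : Function.Injective y) (lam : Fin (N + 1) → ℕ) :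
    genS a b c y lam =
      (Matrix.of fun r j : Fin (N + 1) => phiMoment a b c y r (lam j + (N - (j : ℕ)))).det := by
  set A : Matrix (Fin (N + 1)) (Fin (N + 1)) L :=
    Matrix.of fun r i => (phiMatrix a b c y)⁻¹ 0 i * y i ^ (r : ℕ) with hA
  have hmul (f : Fin (N + 1) → ℕ) :
      A * (Matrix.of fun i j => (phi a b (f j)).eval₂ c (y i)) =
        Matrix.of fun r j : Fin (N + 1) => phiMoment a b c y r (f j) := by
    ext r j
    simp [hA, mul_apply, phiMoment]
  have hunit : A.det * (phiMatrix a b c y).det = 1 := by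
    rw [← det_mul, phiMatrix, hmul fun j => N - (j : ℕ), det_of_isLowerTriangular]
    · refine Finset.prod_eq_one fun i _ => ?_
      rw [of_apply, phiMoment_eq_of_add_le a b c hy _ _ (by lia), if_pos (by lia)]
    · intro i j hij
      have hij' : (i : ℕ) < j := hij
      rw [of_apply, phiMoment_eq_of_add_le a b c hy _ _ (by lia), if_neg (by lia)]
  rw [← hmul fun j => lam j + (N - (j : ℕ)), det_mul, genS, ← det_phiMatrix a b c y,
    div_eq_iff (det_phiMatrix_ne_zero a b c hy), mul_right_comm, hunit, one_mul]
  rfl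

/-- If the last parts of `lam` vanish, its moment determinant reduces to the leading block. -/
lemma det_phiMoment_eq_leading_block (hy : Function.Injective y) (lam : Fin (N + 1) → ℕ) (v : ℕ)
    (hv : v + 1 ≤ N + 1) (hlam : ∀ j : Fin (N + 1), v < (j : ℕ) → lam j = 0) :
    (Matrix.of fun r j : Fin (N + 1) => phiMoment a b c y r (lam j + (N - (j : ℕ)))).det =
      (Matrix.of fun r j : Fin (v + 1) =>
        phiMoment a b c y r (lam (Fin.castLE hv j) + (N - (j : ℕ)))).det := by
  let e : Fin (v + 1) ⊕ Fin (N - v) ≃ Fin (N + 1) :=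
    finSumFinEquiv.trans (finCongr (by lia))
  have hl (j : Fin (v + 1)) : e (Sum.inl j) = Fin.castLE hv j := Fin.ext (by simp [e])
  have hr (j : Fin (N - v)) : (e (Sum.inr j) : ℕ) = v + 1 + j := by simp [e]
  have hlam_r (j : Fin (N - v)) : lam (e (Sum.inr j)) = 0 := hlam _ (by rw [hr]; lia)
  rw [← det_submatrix_equiv_self e, ← fromBlocks_toBlocks (submatrix _ e e)]
  have h₁₂ : (submatrix (Matrix.of fun r j : Fin (N + 1) =>
      phiMoment a b c y r (lam j + (N - (j : ℕ)))) e e).toBlocks₁₂ = 0 := by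
    ext r j
    simp only [toBlocks₁₂, submatrix_apply, of_apply, hlam_r, hr, hl,
      Fin.val_castLE, Matrix.zero_apply]
    rw [phiMoment_eq_of_add_le a b c hy _ _ (by lia), if_neg (by lia)]
  rw [h₁₂, det_fromBlocks_zero₁₂]
  have h₂₂ : (submatrix (Matrix.of fun r j : Fin (N + 1) =>
      phiMoment a b c y r (lam j + (N - (j : ℕ)))) e e).toBlocks₂₂.det = 1 := by
    rw [det_of_isLowerTriangular]
    · refine Finset.prod_eq_one fun i _ => ?_
      simp only [toBlocks₂₂, submatrix_apply, of_apply, hlam_r, hr]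
      rw [phiMoment_eq_of_add_le a b c hy _ _ (by lia), if_pos (by lia)]
    · intro i j hij
      have hij' : (i : ℕ) < j := hij
      simp only [toBlocks₂₂, submatrix_apply, of_apply, hlam_r, hr]
      rw [phiMoment_eq_of_add_le a b c hy _ _ (by lia), if_neg (by lia)]
  rw [h₂₂, mul_one]
  congr 1

end Moments

lemma xv_injective (K : Type*) [Field K] (n : ℕ) : Function.Injective (xv K n) :=
  (IsFractionRing.injective (MvPolynomial (Fin n) K) (Fn K n)).comp
    (MvPolynomial.X_injective (σ := Fin n) (R := K))

/-- **Hook case of the Jacobi–Trudy formula.** For `u, v ≥ 0` with `v + 1 ≤ n`,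
`S_{(u|v)} = S_{(u+1,1^v)}(x|a,b)` equals the determinant of the `(v+1)×(v+1)` matrix
with first row `(h^{(0)}_{u+1},…,h^{(v)}_{u+1})` and `i`-th row `(h^{(0)}_{2-i},…,h^{(v)}_{2-i})`
for `2 ≤ i ≤ v+1`. -/
theorem hook_jacobi_trudy (K : Type*) [Field K] (a b : ℤ → K) (n : ℕ) (hn : 1 ≤ n)
    (u v : ℕ) (hv : v + 1 ≤ n) :
    genHook a b (cK K n) (xv K n) u v =
      Matrix.det (Matrix.of fun i j : Fin (v + 1) =>
        genhr a b (cK K n) (xv K n) (j : ℕ)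
          (if (i : ℕ) = 0 then (u : ℤ) + 1 else 1 - (i : ℕ))) := by
  obtain ⟨N, rfl⟩ : ∃ N, n = N + 1 := ⟨n - 1, by lia⟩
  have hy := xv_injective K (N + 1)
  rw [genHook, genS_eq_det_phiMoment a b _ hy,
    det_phiMoment_eq_leading_block a b _ hy _ v hv
      (fun j hj => by rw [if_neg (by lia), if_neg (by lia)]), ← det_transpose]
  congr 1
  ext i j
  simp only [transpose_apply, of_apply, Fin.val_castLE]
  rw [← genhr_sub_eq_phiMoment a b _ hy _ _ (by lia)]
  congr 1
  split_ifs <;> lia
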